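/- Let (U, W, υ, φ) be a topological gluing datum over an index set I, with glued space Q and canonical maps ι i : U i → Q, and assume in addition that every map υ i j : W i j → U i is an open map. Then for every i ∈ I, the map ι i : U i → Q is an open topological embedding (it is injective, continuous, and open); in particular range (ι i) is an open subset of Q and Q = ⋃_{i ∈ I} range (ι i) is an open cover of Q. -/

import Mathlib

open Set Function Topology

/-- The gluing relation on the sigma type `Σ i, U i` associated with a gluing datum:
`⟨i, x⟩ ~ ⟨j, y⟩` iff there exists `u : W i j` with `υ i j u = x` and `υ j i (φ i j u) = y`. -/
def glueRel {I : Type*} (U : I → Type*) (W : I → I → Type*)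
    (υ : ∀ i j, W i j → U i) (φ : ∀ i j, W i j → W j i) :
    (Σ i, U i) → (Σ i, U i) → Prop :=
  fun p q => ∃ u : W p.1 q.1, υ p.1 q.1 u = p.2 ∧ υ q.1 p.1 (φ p.1 q.1 u) = q.2

/-- The glued space: the quotient of `Σ i, U i` by the gluing relation, equipped with the
quotient topology. -/
abbrev Glued {I : Type*} (U : I → Type*) (W : I → I → Type*)
    (υ : ∀ i j, W i j → U i) (φ : ∀ i j, W i j → W j i) : Type _ :=
  Quot (glueRel U W υ φ)

/-- The canonical map `U i → Q` into the glued space. -/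
def glueι {I : Type*} (U : I → Type*) (W : I → I → Type*)
    (υ : ∀ i j, W i j → U i) (φ : ∀ i j, W i j → W j i) (i : I) :
    U i → Glued U W υ φ :=
  fun x => Quot.mk _ ⟨i, x⟩

/-!
The axioms make the gluing relation an equivalence relation, so two points become equal in the
glued space only through a single overlap `W i j`. Hence the set of points of `U j` glued to a point
of an open set `V ⊆ U i` is the image, under the open map `υ j i`, of the preimage of `V` in
`W j i`.
-/

section Glue

variable {I : Type*} {U : I → Type*} {W : I → I → Type*}
  {υ : ∀ i j, W i j → U i} {φ : ∀ i j, W i j → W j i}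

theorem equivalence_glueRel (hsurj : ∀ i, Surjective (υ i i))
    (hdiag : ∀ i (u : W i i), υ i i (φ i i u) = υ i i u)
    (hφφ : ∀ i j (u : W i j), φ j i (φ i j u) = u)
    (hcoc : ∀ i j k (u : W i j) (v : W j k), υ j i (φ i j u) = υ j k v →
      ∃ w : W i k, υ i k w = υ i j u ∧ υ k i (φ i k w) = υ k j (φ j k v)) :
    Equivalence (glueRel U W υ φ) where
  refl := by
    rintro ⟨i, x⟩
    obtain ⟨u, hu⟩ := hsurj i x
    exact ⟨u, hu, (hdiag i u).trans hu⟩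
  symm := by
    rintro ⟨i, x⟩ ⟨j, y⟩ ⟨u, hux, huy⟩
    exact ⟨φ i j u, huy, (congrArg (υ i j) (hφφ i j u)).trans hux⟩
  trans := by
    rintro ⟨i, x⟩ ⟨j, y⟩ ⟨k, z⟩ ⟨u, hux, huy⟩ ⟨v, hvy, hvz⟩
    obtain ⟨w, hwu, hwv⟩ := hcoc i j k u v (huy.trans hvy.symm)
    exact ⟨w, hwu.trans hux, hwv.trans hvz⟩

theorem glueι_eq_glueι_iff (h : Equivalence (glueRel U W υ φ)) {i j : I} {x : U i} {y : U j} :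
    glueι U W υ φ i x = glueι U W υ φ j y ↔
      ∃ u : W i j, υ i j u = x ∧ υ j i (φ i j u) = y :=
  h.quot_mk_eq_iff ⟨i, x⟩ ⟨j, y⟩

theorem glueι_injective (h : Equivalence (glueRel U W υ φ)) {i : I}
    (hdiag : ∀ u : W i i, υ i i (φ i i u) = υ i i u) :
    Injective (glueι U W υ φ i) := by
  intro x y hxy
  obtain ⟨u, rfl, rfl⟩ := (glueι_eq_glueι_iff h).1 hxy
  exact (hdiag u).symm

theorem preimage_image_glueι (h : Equivalence (glueRel U W υ φ)) (i j : I) (V : Set (U i)) :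
    glueι U W υ φ j ⁻¹' (glueι U W υ φ i '' V) =
      υ j i '' ((fun u => υ i j (φ j i u)) ⁻¹' V) := by
  ext y
  constructor
  · rintro ⟨x, hx, hxy⟩
    obtain ⟨u, rfl, rfl⟩ := (glueι_eq_glueι_iff h).1 hxy.symm
    exact ⟨u, hx, rfl⟩
  · rintro ⟨u, hu, rfl⟩
    exact ⟨υ i j (φ j i u), hu, ((glueι_eq_glueι_iff h).2 ⟨u, rfl, rfl⟩).symm⟩

variable (U W υ φ) in
theorem iUnion_range_glueι : ⋃ i, range (glueι U W υ φ i) = univ := by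
  refine eq_univ_of_forall ?_
  rintro ⟨i, x⟩
  exact mem_iUnion.2 ⟨i, x, rfl⟩

variable [∀ i, TopologicalSpace (U i)]

theorem continuous_glueι (i : I) : Continuous (glueι U W υ φ i) :=
  continuous_quot_mk.comp continuous_sigmaMk

theorem isOpen_glued_iff {s : Set (Glued U W υ φ)} :
    IsOpen s ↔ ∀ i, IsOpen (glueι U W υ φ i ⁻¹' s) :=
  isQuotientMap_quot_mk.isOpen_preimage.symm.trans isOpen_sigma_iff

variable [∀ i j, TopologicalSpace (W i j)]

theorem isOpenMap_glueι (h : Equivalence (glueRel U W υ φ)) {i : I}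
    (hυo : ∀ j, IsOpenMap (υ j i)) (hυφ : ∀ j, Continuous fun u => υ i j (φ j i u)) :
    IsOpenMap (glueι U W υ φ i) := by
  intro V hV
  refine isOpen_glued_iff.2 fun j => ?_
  rw [preimage_image_glueι h]
  exact hυo j _ (hV.preimage (hυφ j))

theorem glueι_isOpenEmbedding_general (hυφ : ∀ i j, Continuous fun u => υ i j (φ j i u))
    (hsurj : ∀ i, Surjective (υ i i))
    (hdiag : ∀ i (u : W i i), υ i i (φ i i u) = υ i i u)
    (hφφ : ∀ i j (u : W i j), φ j i (φ i j u) = u)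
    (hcoc : ∀ i j k (u : W i j) (v : W j k), υ j i (φ i j u) = υ j k v →
      ∃ w : W i k, υ i k w = υ i j u ∧ υ k i (φ i k w) = υ k j (φ j k v))
    (hυo : ∀ i j, IsOpenMap (υ i j)) :
    (∀ i, IsOpenEmbedding (glueι U W υ φ i)) ∧ ⋃ i, range (glueι U W υ φ i) = univ := by
  have h : Equivalence (glueRel U W υ φ) := equivalence_glueRel hsurj hdiag hφφ hcoc
  exact ⟨fun i => .of_continuous_injective_isOpenMap (continuous_glueι i)
    (glueι_injective h (hdiag i)) (isOpenMap_glueι h (hυo · i) (hυφ i)),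
    iUnion_range_glueι U W υ φ⟩

end Glue

/-- If all the structure maps `υ i j` are open, then each canonical map into the glued space is
an open topological embedding, its range is open, and the ranges form an open cover. -/
theorem glueι_isOpenEmbedding {I : Type*}
    (U : I → Type*) [∀ i, TopologicalSpace (U i)]
    (W : I → I → Type*) [∀ i j, TopologicalSpace (W i j)]
    (υ : ∀ i j, W i j → U i) (φ : ∀ i j, W i j → W j i)
    (hυc : ∀ i j, Continuous (υ i j)) (hφc : ∀ i j, Continuous (φ i j))
    (hdiag_bij : ∀ i, Function.Bijective (υ i i))
    (hdiag : ∀ i (u : W i i), υ i i (φ i i u) = υ i i u)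
    (hφφ : ∀ i j (u : W i j), φ j i (φ i j u) = u)
    (hcoc : ∀ i j k (u : W i j) (v : W j k),
      υ j i (φ i j u) = υ j k v →
      ∃ w : W i k, υ i k w = υ i j u ∧ υ k i (φ i k w) = υ k j (φ j k v))
    (hυo : ∀ i j, IsOpenMap (υ i j)) :
    (∀ i, IsOpenEmbedding (glueι U W υ φ i)) ∧
    (∀ i, Function.Injective (glueι U W υ φ i) ∧ Continuous (glueι U W υ φ i) ∧
      IsOpenMap (glueι U W υ φ i)) ∧
    (∀ i, IsOpen (Set.range (glueι U W υ φ i))) ∧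
    (⋃ i, Set.range (glueι U W υ φ i)) = Set.univ := by
  obtain ⟨hemb, hcover⟩ := glueι_isOpenEmbedding_general
    (fun i j => (hυc i j).comp (hφc j i)) (fun i => (hdiag_bij i).surjective) hdiag hφφ hcoc hυo
  exact ⟨hemb, fun i => ⟨(hemb i).injective, (hemb i).continuous, (hemb i).isOpenMap⟩,
    fun i => (hemb i).isOpen_range, hcover⟩
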